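/- Let g ≥ 1, let n be an odd positive integer, and let σ be a permutation of Fin (2g+2) with exactly one fixed point such that every other orbit has exactly n elements (so n divides 2g+1; this models an automorphism of odd order n of a hyperelliptic surface fixing exactly one branch point). Then the subgroup of σ*-fixed elements {y ∈ J : σ* y = y} has cardinality 2^{(2g+1)/n − 1}. (This is the statement that an odd-order automorphism of a hyperelliptic Riemann surface of genus g fixing exactly one branch point fixes exactly 2^{(2g+1)/n − 1} two-spin structures.) -/

import Mathlib

/-!
A fixed class of `J = V ⧸ W` is represented by `x ∈ V` with `x ∘ σ - x` in `W`, that is, constant.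
This difference vanishes at the fixed branch point `i₀`, so it is zero: the fixed classes are
exactly the classes of invariant functions, and `|W| * |J^σ| = |V^σ|`. Invariant functions are
functions on the set of orbits, and the sum of the values maps them onto the coefficients because
the indicator function of `i₀` is invariant; hence `|V^σ| * m = m ^ #orbits` for coefficients
`ZMod m`. As `|W| = m`, there are `m ^ (#orbits - 2)` fixed classes. When all orbits other than
`{i₀}` have `n` elements, `#orbits = (2g + 1) / n + 1`.
-/

open Function MulAction Subgroup

lemma card_mul_card_fixed_quotient {E : Type*} [AddGroup E] (W : AddSubgroup E) {f : E → E}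
    {f' : E ⧸ W → E ⧸ W} (hf' : ∀ x : E, f' x = f x) (hf : ∀ x, -f x + x ∈ W → f x = x) :
    Nat.card W * Nat.card {z | f' z = z} = Nat.card {x | f x = x} := by
  have preimage_fixed : QuotientAddGroup.mk ⁻¹' {z | f' z = z} = {x | f x = x} := by
    ext x
    simp only [Set.mem_preimage, Set.mem_ofPred_eq, hf', QuotientAddGroup.eq]
    exact ⟨hf x, fun hx ↦ by simp [hx]⟩
  rw [← Nat.card_prod, ← preimage_fixed]
  exact Nat.card_congr (QuotientAddGroup.preimageMkEquivAddSubgroupProdSet W _).symm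

section Orbits

variable {ι : Type*} (σ : Equiv.Perm ι)

/-- The orbits of a permutation, fixed points included, encoded as the orbits of the cyclic group
it generates. -/
abbrev PermOrbits : Type _ := orbitRel.Quotient (zpowers σ) ι

lemma card_eq_sum_card_permOrbits [Finite ι] [Fintype (PermOrbits σ)] :
    Nat.card ι = ∑ ω : PermOrbits σ, Nat.card ω.orbit := by
  rw [Nat.card_congr (selfEquivSigmaOrbits' (zpowers σ) ι), Nat.card_sigma]

variable {σ}

lemma minimalPeriod_eq_of_pow_apply {n : ℕ} (hn : 0 < n) {i : ι} (hi : (σ ^ n) i = i)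
    (hlt : ∀ m, 0 < m → m < n → (σ ^ m) i ≠ i) : minimalPeriod σ i = n := by
  have isPeriodicPt_iff (m : ℕ) : IsPeriodicPt σ m i ↔ (σ ^ m) i = i := by
    rw [IsPeriodicPt, IsFixedPt, Equiv.Perm.iterate_eq_pow]
  have periodic := (isPeriodicPt_iff n).2 hi
  refine (periodic.minimalPeriod_le hn).eq_of_not_lt fun h ↦ ?_
  exact hlt _ (periodic.minimalPeriod_pos hn) h
    ((isPeriodicPt_iff _).1 (isPeriodicPt_minimalPeriod σ i))

lemma card_orbit_zpowers_eq_minimalPeriod (i : ι) :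
    Nat.card (orbit (zpowers σ) i) = minimalPeriod σ i :=
  (Nat.card_congr (orbitZPowersEquiv σ i)).trans (Nat.card_zmod _)

lemma card_permOrbits_of_minimalPeriod_eq [Finite ι] {n : ℕ} (hn : 0 < n) {i₀ : ι}
    (hi₀ : σ i₀ = i₀) (hσ : ∀ i ≠ i₀, minimalPeriod σ i = n) :
    Nat.card (PermOrbits σ) = (Nat.card ι - 1) / n + 1 := by
  classical
  have := Fintype.ofFinite (PermOrbits σ)
  let ω₀ : PermOrbits σ := ⟦i₀⟧
  have card_fixed : Nat.card ω₀.orbit = 1 :=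
    (card_orbit_zpowers_eq_minimalPeriod i₀).trans (minimalPeriod_eq_one_iff_isFixedPt.2 hi₀)
  have card_other : ∀ ω ∈ ({ω₀}ᶜ : Finset (PermOrbits σ)), Nat.card ω.orbit = n := by
    intro ω hω
    induction ω using Quotient.inductionOn with | h i =>
    have hi : i ≠ i₀ := by rintro rfl; simp [ω₀] at hω
    exact (card_orbit_zpowers_eq_minimalPeriod i).trans (hσ i hi)
  have card_ι : Nat.card ι = 1 + (Nat.card (PermOrbits σ) - 1) * n := by
    rw [card_eq_sum_card_permOrbits σ, Fintype.sum_eq_add_sum_compl ω₀, card_fixed,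
      Finset.sum_congr rfl card_other, Finset.sum_const, Finset.card_compl, Finset.card_singleton,
      Nat.card_eq_fintype_card, smul_eq_mul]
  have : Nonempty (PermOrbits σ) := ⟨ω₀⟩
  rw [card_ι, Nat.add_sub_cancel_left, Nat.mul_div_cancel _ hn, Nat.sub_add_cancel Nat.card_pos]

end Orbits

section InvariantFunctions

variable {ι A : Type*} {σ : Equiv.Perm ι}

lemma apply_eq_of_comp_eq {x : ι → A} (hx : x ∘ σ = x) {i j : ι} (hij : i ∈ orbit (zpowers σ) j) :
    x i = x j := by
  have apply_perm (i : ι) : x (σ i) = x i := congrFun hx i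
  obtain ⟨⟨_, k, rfl⟩, rfl⟩ := hij
  change x ((σ ^ k) j) = x j
  induction k generalizing j with
  | zero => rfl
  | succ k ih => rw [zpow_add_one, Equiv.Perm.mul_apply, ih, apply_perm]
  | pred k ih =>
    rw [zpow_sub_one, Equiv.Perm.mul_apply, ih, ← apply_perm, Equiv.Perm.inv_def,
      Equiv.apply_symm_apply]

/-- Functions invariant under a permutation, viewed as functions on its set of orbits. -/
def invariantEquivPermOrbits (σ : Equiv.Perm ι) (A : Type*) :
    {x : ι → A // x ∘ σ = x} ≃ (PermOrbits σ → A) where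
  toFun x := Quotient.lift x.1 fun _ _ ↦ apply_eq_of_comp_eq x.2
  invFun f := ⟨fun i ↦ f ⟦i⟧, funext fun _ ↦ congrArg f <|
    orbitRel.Quotient.quotient_smul_eq (g := (⟨σ, mem_zpowers σ⟩ : zpowers σ))⟩
  left_inv _ := rfl
  right_inv _ := funext <| Quotient.ind fun _ ↦ rfl

lemma single_comp_eq_single [Zero A] [DecidableEq ι] {i₀ : ι} (hi₀ : σ i₀ = i₀) (a : A) :
    (Pi.single i₀ a : ι → A) ∘ σ = Pi.single i₀ a := by
  funext i
  have apply_eq_iff : σ i = i₀ ↔ i = i₀ := by rw [← σ.apply_eq_iff_eq (x := i), hi₀]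
  simp only [comp_apply, Pi.single_apply, apply_eq_iff]

/-- The functions `x : ι → A` fixed by the action `x ↦ x ∘ σ` of a permutation `σ` of `ι`, as a
subgroup of all functions. -/
def invariantFunctions (σ : Equiv.Perm ι) (A : Type*) [AddGroup A] : AddSubgroup (ι → A) where
  carrier := {x | x ∘ σ = x}
  zero_mem' := rfl
  add_mem' hx hy := congrArg₂ (· + ·) hx hy
  neg_mem' hx := congrArg Neg.neg hx

lemma card_fixed_comp_mul_card [AddCommGroup A] [Fintype ι] {i₀ : ι} (hi₀ : σ i₀ = i₀)
    {V : AddSubgroup (ι → A)} (hV : ∀ x : ι → A, x ∈ V ↔ ∑ i, x i = 0) :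
    Nat.card {x : V | (x : ι → A) ∘ σ = x} * Nat.card A = Nat.card A ^ Nat.card (PermOrbits σ) := by
  classical
  let total : invariantFunctions σ A →+ A :=
    (∑ i, Pi.evalAddMonoidHom (fun _ ↦ A) i).comp (invariantFunctions σ A).subtype
  have total_apply (x : invariantFunctions σ A) : total x = ∑ i, x.1 i := by simp [total]
  have total_surjective : Surjective total := fun a ↦
    ⟨⟨Pi.single i₀ a, single_comp_eq_single hi₀ a⟩, by simp [total_apply]⟩
  have mem_ker (x : invariantFunctions σ A) : x ∈ total.ker ↔ x.1 ∈ V := by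
    rw [AddMonoidHom.mem_ker, total_apply, hV]
  have card_ker : Nat.card {x : V | (x : ι → A) ∘ σ = x} = Nat.card total.ker := Nat.card_congr
    { toFun x := ⟨⟨x.1, x.2⟩, (mem_ker _).2 x.1.2⟩
      invFun x := ⟨⟨x.1, (mem_ker _).1 x.2⟩, x.1.2⟩ }
  have index_ker : total.ker.index = Nat.card A := by
    rw [AddSubgroup.index_ker, AddMonoidHom.range_eq_top.2 total_surjective, AddSubgroup.card_top]
  calc Nat.card {x : V | (x : ι → A) ∘ σ = x} * Nat.card A
      = Nat.card total.ker * total.ker.index := by rw [card_ker, index_ker]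
    _ = Nat.card {x : ι → A // x ∘ σ = x} := AddSubgroup.card_mul_index _
    _ = Nat.card A ^ Nat.card (PermOrbits σ) := by
      rw [Nat.card_congr (invariantEquivPermOrbits σ A), Nat.card_fun]

end InvariantFunctions

section Constants

variable {ι R : Type*}

lemma apply_eq_of_mem_closure_one [AddGroup R] [One R] {V : AddSubgroup (ι → R)} {w : V}
    (hw : w ∈ AddSubgroup.closure {v : V | (v : ι → R) = 1}) (i j : ι) : w.1 i = w.1 j := by
  induction hw using AddSubgroup.closure_induction with
  | mem v hv => rw [show v.1 = 1 from hv]; rfl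
  | zero => rfl
  | add v w _ _ hv hw => exact congrArg₂ (· + ·) hv hw
  | neg v _ hv => exact congrArg Neg.neg hv

lemma card_closure_one [Nonempty ι] [Ring R] {m : ℕ} [CharP R m] {V : AddSubgroup (ι → R)}
    (hV : 1 ∈ V) :
    Nat.card (AddSubgroup.closure {v : V | (v : ι → R) = 1}) = m := by
  have eq_singleton : {v : V | (v : ι → R) = 1} = {⟨1, hV⟩} := by
    ext v
    exact (Subtype.ext_iff (a2 := ⟨1, hV⟩)).symm
  rw [eq_singleton, ← AddSubgroup.zmultiples_eq_closure, Nat.card_zmultiples,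
    AddSubgroup.addOrderOf_mk]
  exact CharP.eq (ι → R) (CharP.addOrderOf_one _) inferInstance

end Constants

lemma sq_mul_card_fixed_quotient {ι : Type*} [Fintype ι] {m : ℕ} (hm : m ∣ Fintype.card ι)
    {σ : Equiv.Perm ι} {i₀ : ι} (hi₀ : σ i₀ = i₀) {V : AddSubgroup (ι → ZMod m)}
    (hV : ∀ x : ι → ZMod m, x ∈ V ↔ ∑ i, x i = 0) {W : AddSubgroup V}
    (hW : W = AddSubgroup.closure {v : V | (v : ι → ZMod m) = 1}) {σs : V ⧸ W → V ⧸ W}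
    (hσs : ∀ x y : V, (y : ι → ZMod m) = (x : ι → ZMod m) ∘ σ →
      σs (QuotientAddGroup.mk x) = QuotientAddGroup.mk y) :
    m ^ 2 * Nat.card {z : V ⧸ W | σs z = z} = m ^ Nat.card (PermOrbits σ) := by
  have : Nonempty ι := ⟨i₀⟩
  have one_mem : 1 ∈ V := by simpa [hV, ZMod.natCast_eq_zero_iff] using hm
  let pullback (x : V) : V :=
    ⟨x.1 ∘ σ, (hV _).2 ((Equiv.sum_comp σ x.1).trans ((hV _).1 x.2))⟩
  have eq_of_neg_add_mem (x : V) (hx : -pullback x + x ∈ W) : pullback x = x := by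
    have neg_add_apply_eq_zero (i : ι) : -x.1 (σ i) + x.1 i = 0 :=
      (apply_eq_of_mem_closure_one (hW ▸ hx) i i₀).trans
        (show -x.1 (σ i₀) + x.1 i₀ = 0 by rw [hi₀, neg_add_cancel])
    exact Subtype.ext (funext fun i ↦ neg_add_eq_zero.1 (neg_add_apply_eq_zero i))
  have card_pullback_fixed :
      Nat.card {x | pullback x = x} = Nat.card {x : V | (x : ι → ZMod m) ∘ σ = x} := by
    simp only [pullback, Subtype.ext_iff]
  have card_W : Nat.card W = m := hW ▸ card_closure_one one_mem
  calc m ^ 2 * Nat.card {z | σs z = z}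
      = Nat.card W * Nat.card {z | σs z = z} * Nat.card (ZMod m) := by
        rw [card_W, Nat.card_zmod]; ring
    _ = Nat.card {x : V | (x : ι → ZMod m) ∘ σ = x} * Nat.card (ZMod m) := by
        rw [card_mul_card_fixed_quotient W (fun x ↦ hσs x (pullback x) rfl) eq_of_neg_add_mem,
          card_pullback_fixed]
    _ = m ^ Nat.card (PermOrbits σ) := by rw [card_fixed_comp_mul_card hi₀ hV, Nat.card_zmod]

/-- The subtraction truncates only when there is a single point, and then `m = 1`. -/
theorem odd_auto_one_fixed_spin_count_general {ι : Type*} [Fintype ι] {m : ℕ}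
    (hm : m ∣ Fintype.card ι) {σ : Equiv.Perm ι} {i₀ : ι} (hi₀ : σ i₀ = i₀)
    {V : AddSubgroup (ι → ZMod m)} (hV : ∀ x : ι → ZMod m, x ∈ V ↔ ∑ i, x i = 0)
    {W : AddSubgroup V} (hW : W = AddSubgroup.closure {v : V | (v : ι → ZMod m) = 1})
    {σs : V ⧸ W → V ⧸ W}
    (hσs : ∀ x y : V, (y : ι → ZMod m) = (x : ι → ZMod m) ∘ σ →
      σs (QuotientAddGroup.mk x) = QuotientAddGroup.mk y) :
    Nat.card {z : V ⧸ W | σs z = z} = m ^ (Nat.card (PermOrbits σ) - 2) := by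
  have sq_mul := sq_mul_card_fixed_quotient hm hi₀ hV hW hσs
  have : Nonempty ι := ⟨i₀⟩
  have hm₀ : 0 < m := Nat.pos_of_dvd_of_pos hm Fintype.card_pos
  obtain rfl | hm₁ : m = 1 ∨ 1 < m := by lia
  · simpa using sq_mul
  have two_le : 2 ≤ Nat.card (PermOrbits σ) :=
    (Nat.pow_dvd_pow_iff_le_right hm₁).1 (Dvd.intro _ sq_mul)
  refine Nat.eq_of_mul_eq_mul_left (pow_pos hm₀ 2) ?_
  rw [sq_mul, ← pow_add, Nat.add_sub_cancel' two_le]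

/-- An odd-order automorphism of a hyperelliptic surface of genus `g` fixing exactly one
branch point (modelled as a permutation `σ` of the `2g+2` branch points with exactly one
fixed point, all other orbits having exactly `n` elements, `n` odd) fixes exactly
`2^{(2g+1)/n - 1}` two-spin structures, i.e. elements of `J = V ⧸ W`. -/
theorem odd_auto_one_fixed_spin_count (g n : ℕ) (hg : 1 ≤ g) (hn : Odd n) (hn' : 0 < n)
    (σ : Equiv.Perm (Fin (2 * g + 2))) (i₀ : Fin (2 * g + 2))
    (hfix : ∀ i, σ i = i ↔ i = i₀)
    (horb : ∀ i : Fin (2 * g + 2), i ≠ i₀ →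
      (σ ^ n) i = i ∧ ∀ m : ℕ, 0 < m → m < n → (σ ^ m) i ≠ i)
    (V : AddSubgroup (Fin (2 * g + 2) → ZMod 2))
    (hV : ∀ x : Fin (2 * g + 2) → ZMod 2, x ∈ V ↔ ∑ i, x i = 0)
    (W : AddSubgroup ↥V)
    (hW : W = AddSubgroup.closure {v : ↥V | (v : Fin (2 * g + 2) → ZMod 2) = 1})
    (σs : (↥V ⧸ W) →+ (↥V ⧸ W))
    (hσs : ∀ x y : ↥V, (y : Fin (2 * g + 2) → ZMod 2) = (x : Fin (2 * g + 2) → ZMod 2) ∘ σ →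
      σs (QuotientAddGroup.mk x) = QuotientAddGroup.mk y) :
    Nat.card {z : ↥V ⧸ W | σs z = z} = 2 ^ ((2 * g + 1) / n - 1) := by
  have hσ : ∀ i ≠ i₀, minimalPeriod σ i = n := fun i hi ↦
    minimalPeriod_eq_of_pow_apply hn' (horb i hi).1 (horb i hi).2
  have two_dvd : 2 ∣ Fintype.card (Fin (2 * g + 2)) := ⟨g + 1, Fintype.card_fin _⟩
  rw [odd_auto_one_fixed_spin_count_general two_dvd ((hfix i₀).2 rfl) hV hW hσs,
    card_permOrbits_of_minimalPeriod_eq hn' ((hfix i₀).2 rfl) hσ, Nat.card_fin]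
  rfl
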